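/- For all integers n ≥ 0, q ≥ 1 and ℓ ≥ 0, the number of words w : {1,…,n} → {1,…,q} with L(w) ≤ ℓ equals Σ_{λ ⊢ n, λ₁ ≤ ℓ} f^λ·K_q(λ). In particular, Σ_{λ ⊢ n} f^λ·K_q(λ) = q^n. -/

import Mathlib

open scoped BigOperators Classical

/-- The `i`-th largest element (0-indexed) of a multiset of naturals, `0` if absent. -/
def nthPart (μ : Multiset ℕ) (i : ℕ) : ℕ :=
  ((μ.sort (· ≤ ·)).reverse).getD i 0

/-- Cells of the Young diagram whose parts are the multiset `μ`. -/
def shapeCells (μ : Multiset ℕ) : Finset (ℕ × ℕ) :=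
  (Finset.range μ.card ×ˢ Finset.range (μ.sum + 1)).filter fun c => c.2 < nthPart μ c.1

/-- Number of standard Young tableaux of shape `μ`. -/
noncomputable def sytCount (μ : Multiset ℕ) : ℕ :=
  Set.ncard {T : ℕ × ℕ → ℕ |
    (∀ c, c ∉ shapeCells μ → T c = 0) ∧
    Set.BijOn T (shapeCells μ : Set (ℕ × ℕ)) (Set.Icc 1 μ.sum) ∧
    (∀ i j, (i, j + 1) ∈ shapeCells μ → T (i, j) < T (i, j + 1)) ∧
    (∀ i j, (i + 1, j) ∈ shapeCells μ → T (i, j) < T (i + 1, j))}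

/-- Number of semistandard Young tableaux of shape `μ` with entries in `{1,…,q}`. -/
noncomputable def ssytCount (q : ℕ) (μ : Multiset ℕ) : ℕ :=
  Set.ncard {T : ℕ × ℕ → ℕ |
    (∀ c, c ∉ shapeCells μ → T c = 0) ∧
    (∀ c ∈ shapeCells μ, 1 ≤ T c ∧ T c ≤ q) ∧
    (∀ i j, (i, j + 1) ∈ shapeCells μ → T (i, j) ≤ T (i, j + 1)) ∧
    (∀ i j, (i + 1, j) ∈ shapeCells μ → T (i, j) < T (i + 1, j))}

/-- Length of the longest weakly increasing subsequence of a word `w : {1,…,n} → {1,…,q}`. -/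
noncomputable def wordLIS (n q : ℕ) (w : Fin n → Fin q) : ℕ :=
  sSup {k : ℕ | ∃ s : Finset (Fin n), s.card = k ∧ MonotoneOn (fun i => w i) (s : Set (Fin n))}

/-!
The proof is the Robinson–Schensted–Knuth correspondence for words, carried out on Gelfand–Tsetlin
patterns instead of tableaux. A semistandard tableau `T` is encoded by the numbers `x k i` of
entries `≤ k` in row `i`; semistandardness becomes the interlacing conditions of `IsGT`
(`toGT_bijOn`).

Row insertion of a letter adds one box to every level `k` above the letter. The row receiving the
box is described by a bumping path `s` (`IsBump`): it starts in the first row and moves down one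
row at each level where the entry `k` in question gets bumped. This local rule can be read
backwards, so insertion is a bijection from pairs (pattern, letter) onto pairs (pattern, corner row
of its shape); see `IsBump.isGT`, `IsBump.corner`, `exists_isBump` and `IsBump.unique_back`.

Hence the number of words of length `n + 1` whose insertion pattern `wordGT` is a given `x` is the
sum, over the corners of the shape of `x`, of the corresponding numbers for length `n`. Standard
tableaux satisfy the same recursion, by deleting the largest entry (`sytSet_succ`). So each
pattern of shape `λ` is hit by exactly `f^λ` words (`ncard_wordGT_eq`), and the words of shape `λ`
number `f^λ · K_q(λ)` (`ncard_shape`).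

Finally, by Schensted's theorem (`schensted`), the entry `wordGT n w k 0` is the length of a longest
weakly increasing subsequence of `w` among its `k` smallest letters; thus the condition `L(w) ≤ ℓ`
is the condition `λ₁ ≤ ℓ` on the shape. The second identity is the case `ℓ = n`.
-/

/-! ### Gelfand–Tsetlin patterns -/

/-- Gelfand–Tsetlin patterns: `x k` is the shape occupied by the entries `≤ k` of a semistandard
tableau with entries in `{1,…,q}`, so that `x (k + 1) / x k` is a horizontal strip. Rows are indexed
from `0`; levels above `q` repeat level `q`. -/
structure IsGT (q : ℕ) (x : ℕ → ℕ → ℕ) : Prop where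
  zero : ∀ i, x 0 i = 0
  mono : ∀ k i, x k i ≤ x (k + 1) i
  inter : ∀ k i, x (k + 1) (i + 1) ≤ x k i
  stab : ∀ k i, q ≤ k → x (k + 1) i = x k i

namespace IsGT

variable {q : ℕ} {x : ℕ → ℕ → ℕ}

lemma anti (h : IsGT q x) (k i : ℕ) : x k (i + 1) ≤ x k i :=
  (h.mono k (i + 1)).trans (h.inter k i)

lemma antitone (h : IsGT q x) (k : ℕ) : Antitone (x k) := antitone_nat_of_succ_le (h.anti k)

lemma le_of_le (h : IsGT q x) {k l : ℕ} (hkl : k ≤ l) (i : ℕ) : x k i ≤ x l i :=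
  monotone_nat_of_le_succ (f := fun k => x k i) (fun k => h.mono k i) hkl

lemma eq_top (h : IsGT q x) {k : ℕ} (hk : q ≤ k) (i : ℕ) : x k i = x q i := by
  induction k, hk using Nat.le_induction with
  | base => rfl
  | succ k hk ih => rw [h.stab k i hk, ih]

lemma le_top (h : IsGT q x) (k i : ℕ) : x k i ≤ x q i := by
  rcases le_total k q with hk | hk
  · exact h.le_of_le hk i
  · exact (h.eq_top hk i).le

lemma eq_zero (h : IsGT q x) : ∀ k i, k ≤ i → x k i = 0 := by
  intro k
  induction k with
  | zero => intro i _; exact h.zero i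
  | succ k ih =>
    intro i hi
    obtain ⟨j, rfl⟩ : ∃ j, i = j + 1 := ⟨i - 1, by omega⟩
    have := h.inter k j
    have := ih j (by omega)
    omega

end IsGT

/-! ### Row insertion -/

/-- Indicator of the position of the box that the path `s` adds at level `k`. The value `s k` is the
row index plus one, and `s k = 0` means that no box is added at level `k`. -/
def boxAt (s : ℕ → ℕ) (k i : ℕ) : ℕ := if s k = i + 1 then 1 else 0

/-- The pattern `x` arises from `y` by row insertion of the letter `a + 1`, with bumping path `s`.
The path stays in its row when that row of `y` has no entry `k + 1`, and otherwise the inserted box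
bumps the first such entry to the next row. -/
structure IsBump (a : ℕ) (s : ℕ → ℕ) (y x : ℕ → ℕ → ℕ) : Prop where
  low : ∀ k ≤ a, s k = 0
  start : s (a + 1) = 1
  eq : ∀ k i, x k i = y k i + boxAt s k i
  step : ∀ k, a < k → s (k + 1) = if y (k + 1) (s k - 1) = y k (s k - 1) then s k else s k + 1

/-- The bumping path of the insertion of the letter `a + 1` into `y`. -/
def bumpPath (y : ℕ → ℕ → ℕ) (a : ℕ) : ℕ → ℕ
  | 0 => 0
  | k + 1 =>
    if k < a then 0 else if k = a then 1 else
      if y (k + 1) (bumpPath y a k - 1) = y k (bumpPath y a k - 1)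
        then bumpPath y a k else bumpPath y a k + 1

/-- Row insertion of the letter `a + 1` into the pattern `y`. -/
def rowInsert (y : ℕ → ℕ → ℕ) (a : ℕ) (k i : ℕ) : ℕ := y k i + boxAt (bumpPath y a) k i

lemma isBump_rowInsert (y : ℕ → ℕ → ℕ) (a : ℕ) :
    IsBump a (bumpPath y a) y (rowInsert y a) where
  low k hk := by
    cases k with
    | zero => rfl
    | succ k => rw [bumpPath, if_pos (by omega)]
  start := by rw [bumpPath, if_neg (by omega), if_pos rfl]
  eq _ _ := rfl
  step k hk := by rw [bumpPath, if_neg (by omega), if_neg (by omega)]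

namespace IsBump

variable {q a : ℕ} {s : ℕ → ℕ} {x y : ℕ → ℕ → ℕ}

lemma path_unique (h : IsBump a s y x) : s = bumpPath y a := by
  have h' := isBump_rowInsert y a
  funext k
  rcases le_or_gt k a with hk | hk
  · rw [h.low k hk, h'.low k hk]
  · replace hk : a + 1 ≤ k := hk
    induction k, hk using Nat.le_induction with
    | base => rw [h.start, h'.start]
    | succ k hk ih => rw [h.step k hk, h'.step k hk, ih]

lemma eq_rowInsert (h : IsBump a s y x) : x = rowInsert y a := by
  funext k i
  rw [h.eq, h.path_unique]
  rfl

/-- Above the inserted letter, the row reached by the path is addable to the shape `y k`. -/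
lemma addable (h : IsBump a s y x) (hy : IsGT q y) {k : ℕ} (hk : a < k) :
    1 ≤ s k ∧ ∀ j, s k = j + 2 → y k (j + 1) < y k j := by
  replace hk : a + 1 ≤ k := hk
  induction k, hk using Nat.le_induction with
  | base => rw [h.start]; exact ⟨le_rfl, fun j hj => by omega⟩
  | succ k hk ih =>
    obtain ⟨h1, h2⟩ := ih
    have hs := h.step k hk
    obtain ⟨j, hj⟩ : ∃ j, s k = j + 1 := ⟨s k - 1, by omega⟩
    rw [hj, Nat.add_sub_cancel] at hs
    have m1 := hy.mono k j
    have m2 := hy.inter k j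
    split_ifs at hs with hc
    · refine ⟨by omega, fun i hi => ?_⟩
      obtain rfl : j = i + 1 := by omega
      have := h2 i hj
      have := hy.mono k i
      omega
    · refine ⟨by omega, fun i hi => ?_⟩
      obtain rfl : j = i := by omega
      omega

/-- The local configurations of a bumping path between two consecutive levels: no box at either
level, the starting level, staying in a row, and moving down a row. -/
lemma local_cases (h : IsBump a s y x) (hy : IsGT q y) (k : ℕ) :
    (s k = 0 ∧ s (k + 1) = 0) ∨ (s k = 0 ∧ s (k + 1) = 1) ∨
    (∃ j, s k = j + 1 ∧ s (k + 1) = j + 1 ∧ y (k + 1) j = y k j) ∨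
    (∃ j, s k = j + 1 ∧ s (k + 1) = j + 2 ∧ y k j < y (k + 1) j) := by
  rcases lt_trichotomy k a with hk | rfl | hk
  · exact .inl ⟨h.low _ hk.le, h.low _ hk⟩
  · exact .inr (.inl ⟨h.low _ le_rfl, h.start⟩)
  · obtain ⟨h1, -⟩ := h.addable hy hk
    have hs := h.step k hk
    obtain ⟨j, hj⟩ : ∃ j, s k = j + 1 := ⟨s k - 1, by omega⟩
    rw [hj, Nat.add_sub_cancel] at hs
    have m1 := hy.mono k j
    split_ifs at hs with hc
    · exact .inr (.inr (.inl ⟨j, hj, hs, hc⟩))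
    · exact .inr (.inr (.inr ⟨j, hj, hs, by omega⟩))

lemma isGT (h : IsBump a s y x) (hy : IsGT q y) (ha : a < q) : IsGT q x where
  zero i := by rw [h.eq, hy.zero, boxAt, h.low 0 (Nat.zero_le _)]; simp
  mono k i := by
    rw [h.eq, h.eq]
    have m1 := hy.mono k i
    unfold boxAt
    rcases h.local_cases hy k with ⟨h1, h2⟩ | ⟨h1, h2⟩ | ⟨j, h1, h2, h3⟩ | ⟨j, h1, h2, h3⟩
    · split_ifs <;> omega
    · split_ifs <;> omega
    · split_ifs <;> omega
    · split_ifs with h4 h5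
      · omega
      · obtain rfl : j = i := by omega
        omega
      · omega
      · omega
  inter k i := by
    rw [h.eq, h.eq]
    have m1 := hy.inter k i
    have hadd := fun hk : a < k => (h.addable hy hk).2
    unfold boxAt
    rcases h.local_cases hy k with ⟨h1, h2⟩ | ⟨h1, h2⟩ | ⟨j, h1, h2, h3⟩ | ⟨j, h1, h2, h3⟩
    · split_ifs <;> omega
    · split_ifs <;> omega
    · have hk : a < k := by
        by_contra hc
        have := h.low k (by omega)
        omega
      have hadd := hadd hk i
      split_ifs with h4 h5
      · omega
      · obtain rfl : j = i + 1 := by omega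
        have := hadd (by omega)
        omega
      · omega
      · omega
    · split_ifs <;> omega
  stab k i hk := by
    rw [h.eq, h.eq, hy.stab k i hk, boxAt, boxAt, h.step k (by omega), hy.stab k _ hk, if_pos rfl]

/-- The bumping path can be recovered downwards from the pattern after the insertion. -/
lemma back (h : IsBump a s y x) (hy : IsGT q y) (k : ℕ) :
    s k = if x k (s (k + 1) - 1) = x (k + 1) (s (k + 1) - 1) then s (k + 1)
      else s (k + 1) - 1 := by
  rw [h.eq, h.eq]
  unfold boxAt
  rcases h.local_cases hy k with ⟨h1, h2⟩ | ⟨h1, h2⟩ | ⟨j, h1, h2, h3⟩ | ⟨j, h1, h2, h3⟩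
  · rw [h1, h2]; simp
  · rw [h1, h2, if_neg]
    have := hy.mono k 0
    simp; omega
  · rw [h1, h2, if_pos]
    simp [h3]
  · rw [h1, h2, if_neg]
    · rfl
    · have := hy.mono k (j + 1)
      simp; omega

lemma stab (h : IsBump a s y x) (hy : IsGT q y) (ha : a < q) {k : ℕ} (hk : q ≤ k) :
    s k = s q := by
  induction k, hk using Nat.le_induction with
  | base => rfl
  | succ k hk ih => rw [h.step k (by omega), hy.stab k _ hk, if_pos rfl, ih]

/-- The row in which a bumping path ends is a corner row of the new shape. -/
lemma corner (h : IsBump a s y x) (hy : IsGT q y) (ha : a < q) :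
    s q = (s q - 1) + 1 ∧ x q (s q - 1 + 1) < x q (s q - 1) := by
  obtain ⟨h1, -⟩ := h.addable hy ha
  obtain ⟨j, hj⟩ : ∃ j, s q = j + 1 := ⟨s q - 1, by omega⟩
  have := hy.anti q j
  rw [h.eq, h.eq, boxAt, boxAt, hj]
  simp; omega

/-- A pattern and a corner row have at most one preimage under insertion. -/
lemma unique_back {b : ℕ} {t : ℕ → ℕ} {z : ℕ → ℕ → ℕ} (h : IsBump a s y x)
    (h' : IsBump b t z x) (hy : IsGT q y) (hz : IsGT q z) (ha : a < q) (hb : b < q)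
    (hst : s q = t q) : a = b ∧ y = z := by
  have key : ∀ k, s k = t k := by
    intro k
    rcases le_total q k with hk | hk
    · rw [h.stab hy ha hk, h'.stab hz hb hk, hst]
    · induction hk using Nat.decreasingInduction with
      | self => exact hst
      | of_succ k hk ih => rw [h.back hy k, h'.back hz k, ih]
  refine ⟨?_, ?_⟩
  · rcases lt_trichotomy a b with hab | hab | hab
    · have h1 := h.start
      have h2 := h'.low (a + 1) hab
      have := key (a + 1)
      omega
    · exact hab
    · have h1 := h'.start
      have h2 := h.low (b + 1) hab
      have := key (b + 1)
      omega
  · funext k i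
    have h1 := h.eq k i
    have h2 := h'.eq k i
    have : boxAt s k i = boxAt t k i := by simp only [boxAt, key k]
    omega

end IsBump

/-- The reversed bumping path that starts at level `q` in row `i`; the argument counts the levels
below `q`. -/
def backPath (x : ℕ → ℕ → ℕ) (q i : ℕ) : ℕ → ℕ
  | 0 => i + 1
  | m + 1 =>
    if x (q - (m + 1)) (backPath x q i m - 1) = x (q - (m + 1) + 1) (backPath x q i m - 1)
      then backPath x q i m else backPath x q i m - 1

/-- Reverse insertion: every corner row of the shape of a pattern is the end of a bumping path. -/
lemma exists_isBump {q i : ℕ} {x : ℕ → ℕ → ℕ} (hx : IsGT q x) (hi : x q (i + 1) < x q i) :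
    ∃ a < q, ∃ s y, IsBump a s y x ∧ IsGT q y ∧ s q = i + 1 := by
  obtain ⟨s, hsq, hback⟩ : ∃ s : ℕ → ℕ, (∀ k, q ≤ k → s k = i + 1) ∧ ∀ k,
      s k = if x k (s (k + 1) - 1) = x (k + 1) (s (k + 1) - 1) then s (k + 1)
        else s (k + 1) - 1 := by
    refine ⟨fun k => backPath x q i (q - k), fun k hk => ?_, fun k => ?_⟩
    · simp only [Nat.sub_eq_zero_of_le hk, backPath]
    · rcases le_or_gt q k with hk | hk
      · simp only [Nat.sub_eq_zero_of_le hk, Nat.sub_eq_zero_of_le (hk.trans (Nat.le_succ k)),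
          hx.stab k _ hk, if_true]
      · obtain ⟨m, hm⟩ : ∃ m, q - k = m + 1 := ⟨q - k - 1, by omega⟩
        have h1 : q - (k + 1) = m := by omega
        have h2 : q - (m + 1) = k := by omega
        simp only [hm, h1]
        rw [backPath, h2]
  -- the reversed path always sits at a corner, hence the box to remove is present
  have hcorner : ∀ k j, s k = j + 1 → x k (j + 1) < x k j := by
    intro k
    rcases le_total q k with hk | hk
    · intro j hj
      rw [hsq k hk] at hj
      obtain rfl : i = j := by omega
      rwa [hx.eq_top hk, hx.eq_top hk]
    · induction hk using Nat.decreasingInduction with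
      | self =>
        intro j hj
        rw [hsq q le_rfl] at hj
        obtain rfl : i = j := by omega
        exact hi
      | of_succ k hk ih =>
        intro j hj
        have hb := hback k
        split_ifs at hb with hc
        · have hj' : s (k + 1) = j + 1 := by omega
          have h1 := ih j hj'
          have h2 := hx.mono k (j + 1)
          rw [hj', Nat.add_sub_cancel] at hc
          omega
        · have hj' : s (k + 1) = j + 2 := by omega
          have h1 := hx.inter k j
          have h2 := hx.mono k (j + 1)
          rw [hj', show j + 2 - 1 = j + 1 from rfl] at hc
          omega
  have hpos : ∀ k j, s k = j + 1 → 1 ≤ x k j := fun k j h => by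
    have := hcorner k j h
    omega
  have hs0 : s 0 = 0 := by
    by_contra h0
    have := hpos 0 (s 0 - 1) (by omega)
    rw [hx.zero] at this
    omega
  have hcases : ∀ k, (s k = 0 ∧ s (k + 1) = 0) ∨ (s k = 0 ∧ s (k + 1) = 1 ∧ x k 0 < x (k + 1) 0) ∨
      (∃ j, s k = j + 1 ∧ s (k + 1) = j + 1 ∧ x k j = x (k + 1) j) ∨
      (∃ j, s k = j + 1 ∧ s (k + 1) = j + 2 ∧ x k (j + 1) < x (k + 1) (j + 1)) := by
    intro k
    have hb := hback k
    have hm := hx.mono k (s (k + 1) - 1)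
    rcases hs : s (k + 1) with _ | j
    · left; rw [hs] at hb; simpa using hb
    · rw [hs, Nat.add_sub_cancel] at hb hm
      split_ifs at hb with hc
      · exact .inr (.inr (.inl ⟨j, hb, rfl, hc⟩))
      · rcases j with _ | j
        · exact .inr (.inl ⟨hb, rfl, by omega⟩)
        · exact .inr (.inr (.inr ⟨j, hb, rfl, by omega⟩))
  -- the inserted letter is the last level `a` at which no box is removed
  have hex : ∃ k, s (k + 1) ≠ 0 := ⟨q, by rw [hsq _ (Nat.le_succ q)]; omega⟩
  obtain ⟨a, ha, hmin⟩ : ∃ a, s (a + 1) ≠ 0 ∧ ∀ k < a, s (k + 1) = 0 :=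
    ⟨Nat.find hex, Nat.find_spec hex, fun k hk => by simpa using Nat.find_min hex hk⟩
  have hlow : ∀ k ≤ a, s k = 0 := by
    intro k hk
    rcases k with _ | k
    · exact hs0
    · exact hmin k hk
  have hhigh : ∀ k, a < k → s k ≠ 0 := by
    intro k hk
    replace hk : a + 1 ≤ k := hk
    induction k, hk using Nat.le_induction with
    | base => exact ha
    | succ k hk ih =>
      have := ih
      rcases hcases k with ⟨h1, h2⟩ | ⟨h1, h2, h3⟩ | ⟨j, h1, h2, h3⟩ | ⟨j, h1, h2, h3⟩ <;> omega
  have haq : a < q := by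
    by_contra hc
    have := hlow q (by omega)
    have := hsq q le_rfl
    omega
  have hle : ∀ k j, boxAt s k j ≤ x k j := by
    intro k j
    unfold boxAt
    split_ifs with h
    · exact hpos k j h
    · exact Nat.zero_le _
  refine ⟨a, haq, s, fun k j => x k j - boxAt s k j, ⟨hlow, ?_, ?_, ?_⟩, ⟨?_, ?_, ?_, ?_⟩,
    hsq q le_rfl⟩
  · have := hlow a le_rfl
    rcases hcases a with ⟨h1, h2⟩ | ⟨h1, h2, h3⟩ | ⟨j, h1, h2, h3⟩ | ⟨j, h1, h2, h3⟩ <;> omega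
  · intro k j
    have := hle k j
    omega
  · intro k hk
    have h0 := hhigh k hk
    rcases hcases k with ⟨h1, h2⟩ | ⟨h1, h2, h3⟩ | ⟨j, h1, h2, h3⟩ | ⟨j, h1, h2, h3⟩
    · omega
    · omega
    · rw [h1, h2, if_pos]
      simp [boxAt, h1, h2, h3]
    · rw [h1, h2, if_neg]
      have := hpos k j h1
      have := hx.mono k j
      simp [boxAt, h1, h2]
      omega
  · intro j
    simp [hx.zero]
  · intro k l
    have h5 := hx.mono k l
    have h6 := hle k l
    have h7 := hle (k + 1) l
    unfold boxAt at *
    rcases hcases k with ⟨h1, h2⟩ | ⟨h1, h2, h3⟩ | ⟨j, h1, h2, h3⟩ | ⟨j, h1, h2, h3⟩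
    · split_ifs <;> omega
    · split_ifs with h8 h9 h9
      · omega
      · omega
      · obtain rfl : l = 0 := by omega
        omega
      · omega
    · split_ifs <;> omega
    · split_ifs with h8 h9 h9
      · omega
      · omega
      · obtain rfl : l = j + 1 := by omega
        omega
      · omega
  · intro k l
    have h5 := hx.inter k l
    have h6 := hle k l
    have h7 := hle (k + 1) (l + 1)
    have h8 := hcorner (k + 1) l
    unfold boxAt at *
    rcases hcases k with ⟨h1, h2⟩ | ⟨h1, h2, h3⟩ | ⟨j, h1, h2, h3⟩ | ⟨j, h1, h2, h3⟩
    · split_ifs <;> omega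
    · split_ifs <;> omega
    · split_ifs with h9 h10 h10
      · omega
      · omega
      · obtain rfl : l = j := by omega
        have := h8 h2
        omega
      · omega
    · split_ifs at * <;> omega
  · intro k j hk
    simp only [boxAt, hsq k hk, hsq (k + 1) (hk.trans (Nat.le_succ k)), hx.stab k j hk]

/-! ### Insertion of words and Schensted's theorem -/

/-- The insertion pattern of a word. The letter `a : Fin q` stands for the entry `a + 1`. -/
def wordGT {q : ℕ} : (n : ℕ) → (Fin n → Fin q) → ℕ → ℕ → ℕ
  | 0, _ => fun _ _ => 0
  | n + 1, w => rowInsert (wordGT n (Fin.init w)) (w (Fin.last n))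

lemma isGT_wordGT {q : ℕ} : ∀ (n : ℕ) (w : Fin n → Fin q), IsGT q (wordGT n w)
  | 0, _ => ⟨fun _ => rfl, fun _ _ => le_rfl, fun _ _ => le_rfl, fun _ _ _ => rfl⟩
  | _ + 1, _ => (isBump_rowInsert _ _).isGT (isGT_wordGT _ _) (Fin.is_lt _)

lemma sum_wordGT {q : ℕ} : ∀ (n : ℕ) (w : Fin n → Fin q),
    ∑ i ∈ Finset.range q, wordGT n w q i = n
  | 0, _ => by simp [wordGT]
  | n + 1, w => by
    have hy := isGT_wordGT n (Fin.init w)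
    have hb := isBump_rowInsert (wordGT n (Fin.init w)) (w (Fin.last n))
    have hx := isGT_wordGT (n + 1) w
    obtain ⟨h1, h2⟩ := hb.corner hy (Fin.is_lt _)
    set j := bumpPath (wordGT n (Fin.init w)) (w (Fin.last n)) q - 1 with hj
    have hjq : j < q := by
      by_contra hc
      have := hx.eq_zero q j (by omega)
      rw [wordGT] at this
      omega
    simp only [wordGT, rowInsert, Finset.sum_add_distrib, sum_wordGT n, boxAt, h1]
    simp [hjq]

/-- The path is still in the first row at level `k` exactly when the first row has no entries
between the inserted letter and `k`. -/
lemma bumpPath_eq_one_iff {q a k : ℕ} {y : ℕ → ℕ → ℕ} (hy : IsGT q y) (hk : a < k) :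
    bumpPath y a k = 1 ↔ y k 0 = y (a + 1) 0 := by
  have hb := isBump_rowInsert y a
  replace hk : a + 1 ≤ k := hk
  induction k, hk using Nat.le_induction with
  | base => simp [hb.start]
  | succ k hk ih =>
    have ih := ih
    have h1 := hy.le_of_le hk 0
    have h2 := hy.mono k 0
    have h3 := (hb.addable hy hk).1
    rcases hb.local_cases hy k with ⟨h1, h2⟩ | ⟨h1, h2⟩ | ⟨j, h4, h5, h6⟩ | ⟨j, h4, h5, h6⟩
    · omega
    · omega
    · rcases j with _ | j
      · omega
      · constructor <;> intro <;> omega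
    · rcases j with _ | j
      · constructor <;> intro <;> omega
      · constructor <;> intro <;> omega

/-- The first row obeys the recursion of longest weakly increasing subsequences: a subsequence
using the new letter extends one whose letters are at most that letter. -/
lemma rowInsert_zero {q : ℕ} {y : ℕ → ℕ → ℕ} (hy : IsGT q y) (a k : ℕ) :
    rowInsert y a k 0 = if a < k then max (y k 0) (y (a + 1) 0 + 1) else y k 0 := by
  unfold rowInsert boxAt
  split_ifs with h1 h2 h2
  · have := (bumpPath_eq_one_iff hy h2).1 h1
    omega
  · rw [(isBump_rowInsert y a).low k (by omega)] at h1
    omega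
  · have h3 := mt (bumpPath_eq_one_iff hy h2).2 h1
    have := hy.le_of_le h2 0
    simp only [Nat.succ_eq_add_one] at this
    omega
  · rfl

/-- Schensted's theorem, for the subwords of letters with entry `≤ k`: the first row of the
insertion pattern measures the longest weakly increasing subsequence. -/
lemma schensted {q : ℕ} : ∀ (n : ℕ) (w : Fin n → Fin q) (k : ℕ),
    IsGreatest {c | ∃ s : Finset (Fin n), s.card = c ∧ MonotoneOn w (s : Set (Fin n)) ∧
      ∀ i ∈ s, (w i : ℕ) < k} (wordGT n w k 0)
  | 0, w, k => by
    refine ⟨⟨∅, by simp [wordGT, MonotoneOn]⟩, ?_⟩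
    rintro c ⟨s, rfl, -⟩
    simp [Finset.eq_empty_of_isEmpty s]
  | n + 1, w, k => by
    have hy := isGT_wordGT n (Fin.init w)
    have ih := schensted n (Fin.init w)
    rw [wordGT, rowInsert_zero hy]
    set a := w (Fin.last n) with ha
    constructor
    · have lift : ∀ l, l ≤ k → ∃ s : Finset (Fin (n + 1)),
          s.card = wordGT n (Fin.init w) l 0 ∧ MonotoneOn w (s : Set (Fin (n + 1))) ∧
          (∀ i ∈ s, (w i : ℕ) < l) ∧ Fin.last n ∉ s := by
        intro l hl
        obtain ⟨s, h1, h2, h3⟩ := (ih l).1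
        refine ⟨s.map Fin.castSuccEmb, by simpa using h1, ?_, ?_, ?_⟩
        · intro i hi j hj hij
          simp only [Finset.coe_map, Set.mem_image] at hi hj
          obtain ⟨i, hi, rfl⟩ := hi
          obtain ⟨j, hj, rfl⟩ := hj
          exact h2 hi hj (by simpa using hij)
        · intro i hi
          obtain ⟨i, hi', rfl⟩ := Finset.mem_map.1 hi
          exact h3 i hi'
        · intro hi
          obtain ⟨i, hi, h⟩ := Finset.mem_map.1 hi
          exact (Fin.castSucc_lt_last i).ne h
      by_cases hk : (a : ℕ) < k
      · rw [if_pos hk]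
        rcases le_total (wordGT n (Fin.init w) (a + 1) 0 + 1) (wordGT n (Fin.init w) k 0) with h | h
        · rw [max_eq_left h]
          obtain ⟨s, h1, h2, h3, -⟩ := lift k le_rfl
          exact ⟨s, h1, h2, h3⟩
        · rw [max_eq_right h]
          obtain ⟨s, h1, h2, h3, h4⟩ := lift (a + 1) hk
          refine ⟨insert (Fin.last n) s, by rw [Finset.card_insert_of_notMem h4, h1], ?_, ?_⟩
          · intro i hi j hj hij
            rw [Finset.coe_insert, Set.mem_insert_iff] at hi hj
            rcases hj with rfl | hj
            · rcases hi with rfl | hi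
              · exact le_rfl
              · have := h3 i hi
                rw [Fin.le_def, ← ha]
                omega
            · rcases hi with rfl | hi
              · exact absurd (Fin.last_le_iff.1 hij ▸ hj) h4
              · exact h2 hi hj hij
          · intro i hi
            rcases Finset.mem_insert.1 hi with rfl | hi
            · exact hk
            · have := h3 i hi
              omega
      · rw [if_neg hk]
        obtain ⟨s, h1, h2, h3, -⟩ := lift k le_rfl
        exact ⟨s, h1, h2, h3⟩
    · rintro c ⟨s, rfl, h2, h3⟩
      -- positions of `s` other than the last one
      have hcard : (s.erase (Fin.last n)).card
          = (Finset.univ.filter fun i : Fin n => Fin.castSucc i ∈ s).card := by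
        symm
        rw [← Finset.card_map Fin.castSuccEmb]
        congr 1
        ext i
        simp only [Finset.mem_map, Finset.mem_filter, Finset.mem_univ, true_and,
          Finset.mem_erase, Fin.coe_castSuccEmb]
        constructor
        · rintro ⟨j, hj, rfl⟩
          exact ⟨(Fin.castSucc_lt_last j).ne, hj⟩
        · rintro ⟨h, hi⟩
          exact ⟨i.castPred h, by simpa using hi, by simp⟩
      have hbound : ∀ l, (∀ i ∈ s, i ≠ Fin.last n → (w i : ℕ) < l) →
          (s.erase (Fin.last n)).card ≤ wordGT n (Fin.init w) l 0 := by
        intro l hl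
        rw [hcard]
        refine (ih l).2 ⟨_, rfl, ?_, ?_⟩
        · intro i hi j hj hij
          simp only [Finset.coe_filter, Finset.mem_univ, true_and, Set.mem_ofPred_eq] at hi hj
          exact h2 hi hj (by simpa using hij)
        · intro i hi
          exact hl _ (Finset.mem_filter.1 hi).2 (Fin.castSucc_lt_last i).ne
      by_cases hl : Fin.last n ∈ s
      · rw [if_pos (h3 _ hl)]
        have h4 := hbound (a + 1) fun i hi _ => Nat.lt_succ_of_le (h2 hi hl (Fin.le_last i))
        have h5 := Finset.card_erase_add_one hl
        omega
      · have h4 := hbound k fun i hi _ => h3 i hi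
        rw [Finset.erase_eq_of_notMem hl] at h4
        split_ifs <;> omega

lemma wordLIS_eq {n q : ℕ} (w : Fin n → Fin q) : wordLIS n q w = wordGT n w q 0 := by
  rw [wordLIS, ← (schensted n w q).csSup_eq]
  congr 1
  ext c
  simp

/-! ### Counting words with a given insertion pattern -/

/-- Counting a finite set by the classes of a relation that is a function on it. -/
lemma ncard_eq_sum {α β : Type*} {S : Set α} (hS : S.Finite) (t : Finset β) (r : α → β → Prop)
    (hex : ∀ a ∈ S, ∃ b ∈ t, r a b) (huniq : ∀ a ∈ S, ∀ b ∈ t, ∀ c ∈ t, r a b → r a c → b = c) :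
    S.ncard = ∑ b ∈ t, {a | a ∈ S ∧ r a b}.ncard := by
  have hfin : ∀ b, {a | a ∈ S ∧ r a b}.Finite := fun b => hS.subset fun a ha => ha.1
  rw [Set.ncard_eq_toFinset_card S hS]
  have h2 : hS.toFinset = t.biUnion fun b => (hfin b).toFinset := by
    ext a
    simp only [Set.Finite.mem_toFinset, Finset.mem_biUnion, Set.mem_ofPred_eq]
    exact ⟨fun ha => (hex a ha).imp fun b hb => ⟨hb.1, ha, hb.2⟩, fun ⟨_, _, ha, _⟩ => ha⟩
  rw [h2, Finset.card_biUnion]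
  · exact Finset.sum_congr rfl fun b _ => (Set.ncard_eq_toFinset_card _ (hfin b)).symm
  · intro b hb c hc hbc
    rw [Function.onFun, Finset.disjoint_left]
    intro a h3 h4
    rw [Set.Finite.mem_toFinset] at h3 h4
    exact hbc (huniq a h3.1 b hb c hc h3.2 h4.2)

/-- Bounded fillings of a finite shape, extended by zero, form a finite set. -/
lemma finite_fillings {N : ℕ} {lam : ℕ → ℕ} (hN : ∀ i, N ≤ i → lam i = 0) (B : ℕ) :
    {T : ℕ × ℕ → ℕ | (∀ c : ℕ × ℕ, ¬ c.2 < lam c.1 → T c = 0) ∧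
      ∀ c : ℕ × ℕ, c.2 < lam c.1 → T c ≤ B}.Finite := by
  have hD : {c : ℕ × ℕ | c.2 < lam c.1}.Finite := by
    refine ((Finset.range N).biUnion fun i =>
      (Finset.range (lam i)).image (Prod.mk i)).finite_toSet.subset ?_
    rintro ⟨i, j⟩ (h : j < lam i)
    simp only [Finset.mem_coe, Finset.mem_biUnion, Finset.mem_range, Finset.mem_image,
      Prod.mk.injEq]
    refine ⟨i, ?_, j, h, rfl, rfl⟩
    by_contra hc
    have := hN i (by omega)
    omega
  have := hD.to_subtype
  refine Set.Finite.of_injOn (f := fun T (c : {c : ℕ × ℕ | c.2 < lam c.1}) => T c)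
    (t := Set.univ.pi fun _ => Set.Iic B) ?_ ?_ (Set.Finite.pi fun _ => Set.finite_Iic B)
  · intro T hT c _
    exact hT.2 c c.2
  · intro T hT T' hT' h
    funext c
    by_cases hc : c.2 < lam c.1
    · exact congrFun h ⟨c, hc⟩
    · rw [hT.1 c hc, hT'.1 c hc]

/-- Standard Young tableaux with entries `1,…,n` whose shape has row lengths `lam`. -/
def sytSet (n : ℕ) (lam : ℕ → ℕ) : Set (ℕ × ℕ → ℕ) :=
  {T | (∀ c : ℕ × ℕ, ¬ c.2 < lam c.1 → T c = 0) ∧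
    Set.BijOn T {c | c.2 < lam c.1} (Set.Icc 1 n) ∧
    (∀ i j, j + 1 < lam i → T (i, j) < T (i, j + 1)) ∧
    (∀ i j, j < lam (i + 1) → T (i, j) < T (i + 1, j))}

lemma sytSet_finite (n : ℕ) {N : ℕ} {lam : ℕ → ℕ} (hN : ∀ i, N ≤ i → lam i = 0) :
    (sytSet n lam).Finite :=
  (finite_fillings hN n).subset fun _ hT => ⟨hT.1, fun _ hc => (hT.2.1.mapsTo hc).2⟩

/-- Removing the largest entry `n + 1` at the end of row `i` is a bijection onto the standard
tableaux of the smaller shape. -/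
lemma sytSet_corner (n : ℕ) {lam : ℕ → ℕ} {i : ℕ} (hi : lam (i + 1) < lam i) :
    {T | T ∈ sytSet (n + 1) lam ∧ T (i, lam i - 1) = n + 1}.ncard
      = (sytSet n (Function.update lam i (lam i - 1))).ncard := by
  have hmem : ∀ c : ℕ × ℕ, c.2 < Function.update lam i (lam i - 1) c.1 ↔
      c.2 < lam c.1 ∧ c ≠ (i, lam i - 1) := by
    rintro ⟨k, j⟩
    rw [Function.update_apply]
    simp only [ne_eq, Prod.mk.injEq]
    split_ifs with h
    · subst h; omega
    · simp [h]
  have hc : (i, lam i - 1).2 < lam (i, lam i - 1).1 := by simp only; omega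
  set c₀ : ℕ × ℕ := (i, lam i - 1) with hc₀
  refine Set.ncard_congr (fun T _ => Function.update T c₀ 0) ?_ ?_ ?_
  · rintro T ⟨⟨h1, h2, h3, h4⟩, h5⟩
    have hne : ∀ {c : ℕ × ℕ}, c ≠ c₀ → Function.update T c₀ 0 c = T c :=
      fun h => Function.update_of_ne h _ _
    refine ⟨fun c hcc => ?_, ⟨fun c hcc => ?_, fun c hcc d hd hcd => ?_, fun m hm => ?_⟩,
      fun k j hkj => ?_, fun k j hkj => ?_⟩
    · by_cases h : c = c₀
      · rw [h, Function.update_self]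
      · rw [hne h]
        exact h1 c fun h' => hcc ((hmem c).2 ⟨h', h⟩)
    · obtain ⟨h6, h7⟩ := (hmem c).1 hcc
      rw [hne h7]
      have h8 := h2.mapsTo h6
      have h9 : T c ≠ n + 1 := fun h => h7 (h2.injOn h6 hc (h.trans h5.symm))
      exact ⟨h8.1, by have := h8.2; omega⟩
    · obtain ⟨h6, h7⟩ := (hmem c).1 hcc
      obtain ⟨h8, h9⟩ := (hmem d).1 hd
      rw [hne h7, hne h9] at hcd
      exact h2.injOn h6 h8 hcd
    · obtain ⟨c, h6, h7⟩ := h2.surjOn (show m ∈ Set.Icc 1 (n + 1) from ⟨hm.1, hm.2.trans n.le_succ⟩)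
      have h8 : c ≠ c₀ := by
        rintro rfl
        have := hm.2
        omega
      exact ⟨c, (hmem c).2 ⟨h6, h8⟩, by rw [hne h8, h7]⟩
    · obtain ⟨h6, h7⟩ := (hmem (k, j + 1)).1 hkj
      have h8 : (k, j) ≠ c₀ := by
        intro h
        rw [hc₀, Prod.mk.injEq] at h
        obtain ⟨rfl, rfl⟩ := h
        simp only at h6
        omega
      rw [hne h7, hne h8]
      exact h3 k j h6
    · obtain ⟨h6, h7⟩ := (hmem (k + 1, j)).1 hkj
      have h8 : (k, j) ≠ c₀ := by
        intro h
        rw [hc₀, Prod.mk.injEq] at h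
        obtain ⟨rfl, rfl⟩ := h
        simp only at h6
        omega
      rw [hne h7, hne h8]
      exact h4 k j h6
  · rintro T T' ⟨-, h⟩ ⟨-, h'⟩ hTT
    funext c
    by_cases hcc : c = c₀
    · rw [hcc, h, h']
    · have := congrFun hTT c
      rwa [Function.update_of_ne hcc, Function.update_of_ne hcc] at this
  · rintro T ⟨h1, h2, h3, h4⟩
    have hT0 : T c₀ = 0 := h1 c₀ fun h => ((hmem c₀).1 h).2 rfl
    have hne : ∀ {c : ℕ × ℕ}, c ≠ c₀ → Function.update T c₀ (n + 1) c = T c :=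
      fun h => Function.update_of_ne h _ _
    have hle : ∀ c, T c ≤ n := by
      intro c
      by_cases h : c.2 < Function.update lam i (lam i - 1) c.1
      · exact (h2.mapsTo h).2
      · rw [h1 c h]; exact Nat.zero_le _
    refine ⟨Function.update T c₀ (n + 1), ⟨⟨fun c hcc => ?_,
      ⟨fun c hcc => ?_, fun c hcc d hd hcd => ?_, fun m hm => ?_⟩,
      fun k j hkj => ?_, fun k j hkj => ?_⟩, Function.update_self ..⟩, ?_⟩
    · have h : c ≠ c₀ := by rintro rfl; exact hcc hc
      rw [hne h]
      exact h1 c fun h' => hcc ((hmem c).1 h').1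
    · by_cases h : c = c₀
      · rw [h, Function.update_self]
        exact ⟨by omega, le_rfl⟩
      · rw [hne h]
        have := h2.mapsTo ((hmem c).2 ⟨hcc, h⟩)
        exact ⟨this.1, this.2.trans n.le_succ⟩
    · by_cases h : c = c₀ <;> by_cases h' : d = c₀
      · rw [h, h']
      · rw [h, Function.update_self, hne h'] at hcd
        have := hle d
        omega
      · rw [h', Function.update_self, hne h] at hcd
        have := hle c
        omega
      · rw [hne h, hne h'] at hcd
        exact h2.injOn ((hmem c).2 ⟨hcc, h⟩) ((hmem d).2 ⟨hd, h'⟩) hcd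
    · by_cases h : m = n + 1
      · exact ⟨c₀, hc, by rw [Function.update_self, h]⟩
      · obtain ⟨c, h6, h7⟩ := h2.surjOn (show m ∈ Set.Icc 1 n from ⟨hm.1, by
          have := hm.2
          omega⟩)
        obtain ⟨h8, h9⟩ := (hmem c).1 h6
        exact ⟨c, h8, by rw [hne h9, h7]⟩
    · have h8 : (k, j) ≠ c₀ := by
        intro h
        rw [hc₀, Prod.mk.injEq] at h
        obtain ⟨rfl, rfl⟩ := h
        omega
      rw [hne h8]
      by_cases h : (k, j + 1) = c₀
      · rw [h, Function.update_self]
        exact Nat.lt_succ_of_le (hle _)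
      · rw [hne h]
        exact h3 k j ((hmem (k, j + 1)).2 ⟨hkj, h⟩)
    · have h8 : (k, j) ≠ c₀ := by
        intro h
        rw [hc₀, Prod.mk.injEq] at h
        obtain ⟨rfl, rfl⟩ := h
        omega
      rw [hne h8]
      by_cases h : (k + 1, j) = c₀
      · rw [h, Function.update_self]
        exact Nat.lt_succ_of_le (hle _)
      · rw [hne h]
        exact h4 k j ((hmem (k + 1, j)).2 ⟨hkj, h⟩)
    · funext c
      by_cases h : c = c₀
      · rw [h, Function.update_self, hT0]
      · simp [Function.update_of_ne h]

/-- The branching recursion of the numbers `f^λ`: the largest entry sits in a corner. -/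
lemma sytSet_succ (n : ℕ) {N : ℕ} {lam : ℕ → ℕ} (hN : ∀ i, N ≤ i → lam i = 0) :
    (sytSet (n + 1) lam).ncard = ∑ i ∈ (Finset.range N).filter fun i => lam (i + 1) < lam i,
      (sytSet n (Function.update lam i (lam i - 1))).ncard := by
  rw [ncard_eq_sum (sytSet_finite (n + 1) hN)
    ((Finset.range N).filter fun i => lam (i + 1) < lam i) (fun T i => T (i, lam i - 1) = n + 1)]
  · exact Finset.sum_congr rfl fun i hi => sytSet_corner n (Finset.mem_filter.1 hi).2
  · rintro T ⟨-, h2, h3, h4⟩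
    obtain ⟨⟨i, j⟩, h5, h6⟩ :=
      h2.surjOn (show n + 1 ∈ Set.Icc 1 (n + 1) from ⟨by omega, le_rfl⟩)
    simp only [Set.mem_ofPred_eq] at h5
    have h7 : ¬ j + 1 < lam i := fun h => by
      have := h3 i j h
      have := (h2.mapsTo (show (i, j + 1) ∈ {c : ℕ × ℕ | c.2 < lam c.1} from h)).2
      omega
    have h8 : ¬ j < lam (i + 1) := fun h => by
      have := h4 i j h
      have := (h2.mapsTo (show (i + 1, j) ∈ {c : ℕ × ℕ | c.2 < lam c.1} from h)).2
      omega
    refine ⟨i, Finset.mem_filter.2 ⟨Finset.mem_range.2 ?_, by omega⟩, ?_⟩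
    · by_contra hc
      have := hN i (by omega)
      omega
    · rw [← h6, show lam i - 1 = j by omega]
  · rintro T ⟨-, h2, -⟩ i hi k hk h h'
    have h5 := (Finset.mem_filter.1 hi).2
    have h6 := (Finset.mem_filter.1 hk).2
    have := h2.injOn (show (i, lam i - 1) ∈ {c : ℕ × ℕ | c.2 < lam c.1} by
        simp only [Set.mem_ofPred_eq]; omega)
      (show (k, lam k - 1) ∈ {c : ℕ × ℕ | c.2 < lam c.1} by
        simp only [Set.mem_ofPred_eq]; omega) (h.trans h'.symm)
    exact congrArg Prod.fst this

/-- Every pattern is the insertion pattern of as many words as there are standard tableaux of its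
shape. Both sides vanish when the shape does not have size `n`. -/
lemma ncard_wordGT_eq {q : ℕ} : ∀ (n : ℕ) (x : ℕ → ℕ → ℕ), IsGT q x →
    {w : Fin n → Fin q | wordGT n w = x}.ncard = (sytSet n (x q)).ncard
  | 0, x, hx => by
    by_cases h : ∀ i, x q i = 0
    · have h0 : x = fun _ _ => 0 := by
        funext k i
        have := hx.le_top k i
        have := h i
        omega
      have h1 : {w : Fin 0 → Fin q | wordGT 0 w = x} = {Fin.elim0} := by
        ext w
        simp [wordGT, h0, eq_iff_true_of_subsingleton]
      have h2 : sytSet 0 (x q) = {fun _ => 0} := by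
        ext T
        simp only [sytSet, h, Set.mem_ofPred_eq, Set.mem_singleton_iff]
        constructor
        · exact fun hT => funext fun c => hT.1 c (by omega)
        · rintro rfl
          refine ⟨fun _ _ => rfl, ?_, fun _ _ h => by omega, fun _ _ h => by omega⟩
          simp
      rw [h1, h2, Set.ncard_singleton, Set.ncard_singleton]
    · push Not at h
      obtain ⟨i, hi⟩ := h
      have h1 : {w : Fin 0 → Fin q | wordGT 0 w = x} = ∅ := by
        ext w
        simp only [Set.mem_ofPred_eq, Set.mem_empty_iff_false, iff_false]
        rintro rfl
        exact hi rfl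
      have h2 : sytSet 0 (x q) = ∅ := by
        ext T
        simp only [Set.mem_empty_iff_false, iff_false]
        rintro ⟨-, hT, -⟩
        have := hT.mapsTo (show (i, 0) ∈ {c : ℕ × ℕ | c.2 < x q c.1} from Nat.pos_of_ne_zero hi)
        have h3 := this.1
        have h4 := this.2
        omega
      rw [h1, h2, Set.ncard_empty, Set.ncard_empty]
  | n + 1, x, hx => by
    rw [sytSet_succ n (fun i hi => hx.eq_zero q i hi),
      ncard_eq_sum (Set.toFinite _) ((Finset.range q).filter fun i => x q (i + 1) < x q i)
        (fun w i => bumpPath (wordGT n (Fin.init w)) (w (Fin.last n)) q = i + 1)]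
    · refine Finset.sum_congr rfl fun i hi => ?_
      obtain ⟨a, ha, s, y, hb, hy, hs⟩ := exists_isBump hx (Finset.mem_filter.1 hi).2
      have hyq : Function.update (x q) i (x q i - 1) = y q := by
        funext j
        have := hb.eq q j
        rw [boxAt, hs] at this
        rw [Function.update_apply]
        split_ifs at this ⊢ with h1 h2 h2
        · subst h1; omega
        · omega
        · omega
        · omega
      rw [hyq, ← ncard_wordGT_eq n y hy]
      refine Set.ncard_congr (fun w _ => Fin.init w) ?_ ?_ ?_
      · rintro w ⟨hw, hr⟩
        have hb' := isBump_rowInsert (wordGT n (Fin.init w)) (w (Fin.last n))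
        change rowInsert _ _ = x at hw
        rw [hw] at hb'
        exact (hb'.unique_back hb (isGT_wordGT _ _) hy (Fin.is_lt _) ha (hr.trans hs.symm)).2
      · rintro w w' ⟨hw, hr⟩ ⟨hw', hr'⟩ h
        have hb' := isBump_rowInsert (wordGT n (Fin.init w)) (w (Fin.last n))
        have hb'' := isBump_rowInsert (wordGT n (Fin.init w')) (w' (Fin.last n))
        change rowInsert _ _ = x at hw hw'
        rw [hw] at hb'
        rw [hw'] at hb''
        have h1 := (hb'.unique_back hb'' (isGT_wordGT _ _) (isGT_wordGT _ _) (Fin.is_lt _)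
          (Fin.is_lt _) (hr.trans hr'.symm)).1
        rw [← Fin.snoc_init_self w, ← Fin.snoc_init_self w', h, Fin.ext h1]
      · intro w hw
        refine ⟨Fin.snoc (α := fun _ => Fin q) w ⟨a, ha⟩, ⟨?_, ?_⟩, ?_⟩
        · change rowInsert _ _ = x
          rw [Fin.init_snoc, Fin.snoc_last, hw, hb.eq_rowInsert]
        · rw [Fin.init_snoc, Fin.snoc_last, hw, ← hb.path_unique, hs]
        · exact Fin.init_snoc (α := fun _ => Fin q) _ _
    · intro w hw
      have hb := isBump_rowInsert (wordGT n (Fin.init w)) (w (Fin.last n))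
      change rowInsert _ _ = x at hw
      rw [hw] at hb
      obtain ⟨h1, h2⟩ := hb.corner (isGT_wordGT _ _) (Fin.is_lt _)
      refine ⟨_, Finset.mem_filter.2 ⟨Finset.mem_range.2 ?_, h2⟩, h1⟩
      by_contra hc
      have := hx.eq_zero q _ (not_lt.1 hc)
      omega
    · intro w _ i _ j _ h h'
      omega

/-! ### Semistandard tableaux as patterns -/

/-- Semistandard tableaux with entries in `{1,…,q}` whose shape has row lengths `lam`. -/
def ssytSet (q : ℕ) (lam : ℕ → ℕ) : Set (ℕ × ℕ → ℕ) :=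
  {T | (∀ c : ℕ × ℕ, ¬ c.2 < lam c.1 → T c = 0) ∧
    (∀ c : ℕ × ℕ, c.2 < lam c.1 → 1 ≤ T c ∧ T c ≤ q) ∧
    (∀ i j, j + 1 < lam i → T (i, j) ≤ T (i, j + 1)) ∧
    (∀ i j, j < lam (i + 1) → T (i, j) < T (i + 1, j))}

/-- Gelfand–Tsetlin patterns with shape `lam`. -/
def gtSet (q : ℕ) (lam : ℕ → ℕ) : Set (ℕ → ℕ → ℕ) := {x | IsGT q x ∧ x q = lam}

lemma exists_not_le (lam : ℕ → ℕ) (T : ℕ × ℕ → ℕ) (k i : ℕ) :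
    ∃ j, ¬ (j < lam i ∧ T (i, j) ≤ k) := ⟨lam i, fun h => lt_irrefl _ h.1⟩

/-- The pattern of a semistandard tableau: `toGT lam T k i` is the number of entries `≤ k` in row
`i`, encoded as the first column of row `i` outside the cells with such entries. -/
noncomputable def toGT (lam : ℕ → ℕ) (T : ℕ × ℕ → ℕ) (k i : ℕ) : ℕ :=
  Nat.find (exists_not_le lam T k i)

lemma lt_toGT {lam : ℕ → ℕ} {T : ℕ × ℕ → ℕ}
    (hT : ∀ i j, j + 1 < lam i → T (i, j) ≤ T (i, j + 1)) (k i j : ℕ) :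
    j < toGT lam T k i ↔ j < lam i ∧ T (i, j) ≤ k := by
  rw [toGT, Nat.lt_find_iff]
  simp only [not_not]
  refine ⟨fun h => h j le_rfl, fun h m hm => ?_⟩
  induction hm using Nat.decreasingInduction with
  | self => exact h
  | of_succ m hm ih => exact ⟨by omega, (hT i m ih.1).trans ih.2⟩

lemma toGT_bijOn {q : ℕ} {lam : ℕ → ℕ} (hlam : Antitone lam) :
    Set.BijOn (toGT lam) (ssytSet q lam) (gtSet q lam) := by
  refine ⟨?_, ?_, ?_⟩
  · rintro T ⟨h1, h2, h3, h4⟩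
    have hlt := lt_toGT h3
    refine ⟨⟨fun i => ?_, fun k i => ?_, fun k i => ?_, fun k i hk => ?_⟩, ?_⟩
    · by_contra hc
      obtain ⟨h5, h6⟩ := (hlt 0 i 0).1 (Nat.pos_of_ne_zero hc)
      have := (h2 (i, 0) h5).1
      omega
    · refine le_of_forall_lt fun j hj => ?_
      rw [hlt] at hj ⊢
      exact ⟨hj.1, by omega⟩
    · refine le_of_forall_lt fun j hj => ?_
      rw [hlt] at hj ⊢
      have := h4 i j hj.1
      exact ⟨hj.1.trans_le (hlam i.le_succ), by omega⟩
    · refine eq_of_forall_lt_iff fun j => ?_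
      rw [hlt, hlt]
      refine and_congr_right fun hj => ?_
      have := (h2 (i, j) hj).2
      omega
    · funext i
      refine eq_of_forall_lt_iff fun j => ?_
      rw [hlt]
      exact and_iff_left_of_imp fun hj => (h2 (i, j) hj).2
  · rintro T ⟨h1, -, h3, -⟩ T' ⟨h1', -, h3', -⟩ h
    funext ⟨i, j⟩
    by_cases hj : j < lam i
    · refine eq_of_forall_ge_iff fun k => ?_
      have h5 := lt_toGT h3 k i j
      have h6 := lt_toGT h3' k i j
      rw [h] at h5
      have := h5.symm.trans h6
      simpa [hj] using this
    · rw [h1 _ hj, h1' _ hj]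
  · rintro x ⟨hx, rfl⟩
    obtain ⟨T, hT0, hT⟩ : ∃ T : ℕ × ℕ → ℕ, (∀ c : ℕ × ℕ, ¬ c.2 < x q c.1 → T c = 0) ∧
        ∀ i j, j < x q i → ∀ k, T (i, j) ≤ k ↔ j < x k i := by
      refine ⟨fun c => if h : ∃ k, c.2 < x k c.1 then Nat.find h else 0, fun c hc => ?_,
        fun i j hj k => ?_⟩
      · refine dif_neg ?_
        rintro ⟨k, hk⟩
        exact hc (hk.trans_le (hx.le_top k _))
      · have h : ∃ k, j < x k i := ⟨q, hj⟩
        simp only [dif_pos h]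
        rw [Nat.find_le_iff]
        exact ⟨fun ⟨m, hm, h'⟩ => h'.trans_le (hx.le_of_le hm i), fun h' => ⟨k, le_rfl, h'⟩⟩
    have hrow : ∀ i j, j + 1 < x q i → T (i, j) ≤ T (i, j + 1) := by
      intro i j hj
      rw [hT i j (by omega)]
      have := (hT i (j + 1) hj _).1 le_rfl
      omega
    refine ⟨T, ⟨hT0, ?_, hrow, ?_⟩, ?_⟩
    · rintro ⟨i, j⟩ hj
      refine ⟨?_, (hT i j hj q).2 hj⟩
      by_contra hc
      have := (hT i j hj 0).1 (by omega)
      rw [hx.zero] at this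
      omega
    · intro i j hj
      have h5 := (hT (i + 1) j hj _).1 le_rfl
      rcases h6 : T (i + 1, j) with _ | k
      · rw [h6, hx.zero] at h5
        omega
      · rw [h6] at h5
        have := (hT i j (hj.trans_le (hx.anti q i)) k).2 (h5.trans_le (hx.inter k i))
        omega
    · funext k i
      refine eq_of_forall_lt_iff fun j => ?_
      rw [lt_toGT hrow]
      constructor
      · rintro ⟨hj, h⟩
        exact (hT i j hj k).1 h
      · intro h
        have hj := h.trans_le (hx.le_top k i)
        exact ⟨hj, (hT i j hj k).2 h⟩

lemma ssytSet_finite (q : ℕ) {N : ℕ} {lam : ℕ → ℕ} (hN : ∀ i, N ≤ i → lam i = 0) :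
    (ssytSet q lam).Finite :=
  (finite_fillings hN q).subset fun _ hT => ⟨hT.1, fun c hc => (hT.2.1 c hc).2⟩

/-! ### Partitions and their row lengths -/

/-- The parts of a multiset in weakly decreasing order. -/
noncomputable def rowList (μ : Multiset ℕ) : List ℕ := (μ.sort (· ≤ ·)).reverse

lemma nthPart_eq (μ : Multiset ℕ) (i : ℕ) : nthPart μ i = (rowList μ).getD i 0 := rfl

lemma coe_rowList (μ : Multiset ℕ) : (rowList μ : Multiset ℕ) = μ := by
  rw [rowList, Multiset.coe_reverse, Multiset.sort_eq]

lemma length_rowList (μ : Multiset ℕ) : (rowList μ).length = μ.card := by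
  rw [← Multiset.coe_card, coe_rowList]

lemma pairwise_rowList (μ : Multiset ℕ) : (rowList μ).Pairwise (· ≥ ·) :=
  List.pairwise_reverse.2 (Multiset.pairwise_sort μ (· ≤ ·))

lemma nthPart_of_card_le {μ : Multiset ℕ} {i : ℕ} (h : μ.card ≤ i) : nthPart μ i = 0 := by
  rw [nthPart_eq, List.getD_eq_default]
  rwa [length_rowList]

lemma nthPart_of_lt {μ : Multiset ℕ} {i : ℕ} (h : i < (rowList μ).length) :
    nthPart μ i = (rowList μ)[i] := by
  rw [nthPart_eq, List.getD_eq_getElem]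

lemma nthPart_mem {μ : Multiset ℕ} {i : ℕ} (h : i < μ.card) : nthPart μ i ∈ μ := by
  rw [← length_rowList] at h
  rw [nthPart_of_lt h]
  have : (rowList μ)[i] ∈ (rowList μ : Multiset ℕ) := Multiset.mem_coe.2 (List.getElem_mem h)
  rwa [coe_rowList] at this

lemma nthPart_le_sum (μ : Multiset ℕ) (i : ℕ) : nthPart μ i ≤ μ.sum := by
  rcases lt_or_ge i μ.card with h | h
  · exact Multiset.le_sum_of_mem (nthPart_mem h)
  · rw [nthPart_of_card_le h]; exact Nat.zero_le _

lemma nthPart_antitone (μ : Multiset ℕ) : Antitone (nthPart μ) := by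
  refine antitone_nat_of_succ_le fun i => ?_
  rcases lt_or_ge (i + 1) (rowList μ).length with h | h
  · rw [nthPart_of_lt h, nthPart_of_lt (Nat.lt_of_succ_lt h)]
    exact List.pairwise_iff_getElem.1 (pairwise_rowList μ) i (i + 1) _ _ i.lt_succ_self
  · rw [nthPart_of_card_le (by rwa [← length_rowList])]
    exact Nat.zero_le _

lemma mem_shapeCells (μ : Multiset ℕ) (c : ℕ × ℕ) : c ∈ shapeCells μ ↔ c.2 < nthPart μ c.1 := by
  rw [shapeCells, Finset.mem_filter, Finset.mem_product, Finset.mem_range, Finset.mem_range]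
  refine and_iff_right_of_imp fun h => ⟨?_, ?_⟩
  · by_contra hc
    rw [nthPart_of_card_le (not_lt.1 hc)] at h
    omega
  · have := nthPart_le_sum μ c.1
    omega

lemma ncard_sytSet (μ : Multiset ℕ) : (sytSet μ.sum (nthPart μ)).ncard = sytCount μ := by
  have : (shapeCells μ : Set (ℕ × ℕ)) = {c | c.2 < nthPart μ c.1} :=
    Set.ext fun c => by rw [Finset.mem_coe, mem_shapeCells]; rfl
  simp only [sytCount, sytSet, mem_shapeCells, this]

lemma ssytCount_eq (q : ℕ) (μ : Multiset ℕ) : ssytCount q μ = (ssytSet q (nthPart μ)).ncard := by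
  simp only [ssytCount, ssytSet, mem_shapeCells]

/-- A weakly decreasing sequence with sum `n` is the sequence of parts of a partition of `n`. -/
lemma exists_partition {n q : ℕ} {lam : ℕ → ℕ} (hlam : Antitone lam) (hq : ∀ i, q ≤ i → lam i = 0)
    (hsum : ∑ i ∈ Finset.range q, lam i = n) : ∃ p : n.Partition, nthPart p.parts = lam := by
  have hex : ∃ m, lam m = 0 := ⟨q, hq q le_rfl⟩
  obtain ⟨m, hm, hmin⟩ : ∃ m, lam m = 0 ∧ ∀ k < m, lam k ≠ 0 :=
    ⟨Nat.find hex, Nat.find_spec hex, fun k hk => Nat.find_min hex hk⟩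
  have hzero : ∀ k, m ≤ k → lam k = 0 := fun k hk => by
    have := hlam hk
    omega
  have hmq : m ≤ q := by
    by_contra hc
    exact hmin q (by omega) (hq q le_rfl)
  set l : List ℕ := (List.range m).map lam with hl
  have hsort : rowList (l : Multiset ℕ) = l := by
    refine List.Perm.eq_of_pairwise (le := (· ≥ ·)) (fun a b _ _ h1 h2 => le_antisymm h2 h1)
      (pairwise_rowList _) ?_ (Multiset.coe_eq_coe.1 (coe_rowList _))
    rw [hl, List.pairwise_map]
    exact (List.pairwise_lt_range).imp fun h => hlam h.le
  refine ⟨⟨(l : Multiset ℕ), ?_, ?_⟩, ?_⟩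
  · intro a ha
    rw [Multiset.mem_coe, hl, List.mem_map] at ha
    obtain ⟨k, hk, rfl⟩ := ha
    exact Nat.pos_of_ne_zero (hmin k (List.mem_range.1 hk))
  · rw [Multiset.sum_coe, hl, ← hsum, ← Finset.sum_subset (Finset.range_mono hmq)
      fun k _ hk => hzero k (by simpa using hk)]
    rfl
  · funext i
    rw [nthPart_eq, hsort]
    rcases lt_or_ge i m with h | h
    · rw [List.getD_eq_getElem _ _ (by simpa [hl] using h)]
      simp [hl]
    · rw [List.getD_eq_default _ _ (by simpa [hl] using h), hzero i h]

lemma nthPart_injective {n : ℕ} {p p' : n.Partition} (h : nthPart p.parts = nthPart p'.parts) :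
    p = p' := by
  have key : ∀ (p : n.Partition) (i : ℕ), (rowList p.parts)[i]? =
      if nthPart p.parts i = 0 then none else some (nthPart p.parts i) := by
    intro p i
    rcases lt_or_ge i p.parts.card with hi | hi
    · rw [if_neg (p.parts_pos (nthPart_mem hi)).ne']
      rw [← length_rowList] at hi
      rw [nthPart_of_lt hi, List.getElem?_eq_getElem hi]
    · rw [if_pos (nthPart_of_card_le hi), List.getElem?_eq_none]
      rwa [length_rowList]
  have hl : rowList p.parts = rowList p'.parts := List.ext_getElem? fun i => by
    rw [key, key, h]
  ext1
  rw [← coe_rowList p.parts, hl, coe_rowList]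

/-- The number of words whose insertion pattern has a given shape. -/
lemma ncard_shape {n q : ℕ} (p : n.Partition) :
    {w : Fin n → Fin q | wordGT n w q = nthPart p.parts}.ncard
      = sytCount p.parts * ssytCount q p.parts := by
  have hbij := toGT_bijOn (q := q) (nthPart_antitone p.parts)
  have hfin : (gtSet q (nthPart p.parts)).Finite := by
    rw [← hbij.image_eq]
    exact (ssytSet_finite q fun i hi => nthPart_of_card_le hi).image _
  have hcard : (gtSet q (nthPart p.parts)).ncard = ssytCount q p.parts := by
    rw [← hbij.image_eq, hbij.injOn.ncard_image, ssytCount_eq]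
  rw [ncard_eq_sum (Set.toFinite _) hfin.toFinset (fun w x => wordGT n w = x),
    Finset.sum_congr rfl (g := fun _ => sytCount p.parts)]
  · rw [Finset.sum_const, ← Set.ncard_eq_toFinset_card _ hfin, hcard, smul_eq_mul, mul_comm]
  · intro x hx
    obtain ⟨hx, hxq⟩ := hfin.mem_toFinset.1 hx
    rw [← ncard_sytSet, p.parts_sum, ← hxq, ← ncard_wordGT_eq n x hx]
    congr 1
    ext w
    simp only [Set.mem_ofPred_eq, and_iff_right_iff_imp]
    rintro rfl
    exact hxq.symm ▸ rfl
  · exact fun w hw => ⟨_, hfin.mem_toFinset.2 ⟨isGT_wordGT n w, hw⟩, rfl⟩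
  · exact fun w _ x _ y _ h h' => h.symm.trans h'

theorem stmt5 (n q ℓ : ℕ) (hq : 1 ≤ q) :
    (Set.ncard {w : Fin n → Fin q | wordLIS n q w ≤ ℓ}
      = ∑ lam ∈ Finset.univ.filter (fun lam : Nat.Partition n => nthPart lam.parts 0 ≤ ℓ),
          sytCount lam.parts * ssytCount q lam.parts)
    ∧ (∑ lam : Nat.Partition n, sytCount lam.parts * ssytCount q lam.parts = q ^ n) := by
  have key : ∀ ℓ : ℕ, Set.ncard {w : Fin n → Fin q | wordLIS n q w ≤ ℓ}
      = ∑ lam ∈ Finset.univ.filter (fun lam : Nat.Partition n => nthPart lam.parts 0 ≤ ℓ),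
          sytCount lam.parts * ssytCount q lam.parts := by
    intro ℓ
    rw [ncard_eq_sum (Set.toFinite _) (Finset.univ.filter
      (fun lam : Nat.Partition n => nthPart lam.parts 0 ≤ ℓ))
      (fun w p => wordGT n w q = nthPart p.parts)]
    · refine Finset.sum_congr rfl fun p hp => ?_
      rw [← ncard_shape]
      congr 1
      ext w
      simp only [Set.mem_ofPred_eq, and_iff_right_iff_imp, wordLIS_eq]
      intro h
      rw [h]
      exact (Finset.mem_filter.1 hp).2
    · intro w hw
      have hx := isGT_wordGT n w
      obtain ⟨p, hp⟩ := exists_partition (hx.antitone q) (hx.eq_zero q) (sum_wordGT n w)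
      refine ⟨p, Finset.mem_filter.2 ⟨Finset.mem_univ _, ?_⟩, hp.symm⟩
      rw [hp, ← wordLIS_eq]
      exact hw
    · exact fun w _ p _ p' _ h h' => nthPart_injective (h.symm.trans h')
  refine ⟨key ℓ, ?_⟩
  -- a longest weakly increasing subsequence has length at most `n`
  have h := key n
  rw [Finset.filter_true_of_mem fun p _ => (nthPart_le_sum p.parts 0).trans p.parts_sum.le] at h
  have huniv : {w : Fin n → Fin q | wordLIS n q w ≤ n} = Set.univ := by
    refine Set.eq_univ_of_forall fun w => ?_
    obtain ⟨s, hs, -⟩ := (schensted n w q).1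
    rw [Set.mem_ofPred_eq, wordLIS_eq, ← hs]
    simpa using Finset.card_le_univ s
  rw [← h, huniv, Set.ncard_univ, Nat.card_eq_fintype_card]
  simp
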